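/- Let n ≥ 1, let α ∈ (0, 2], let t ≥ 0 and let q₁, q₂ satisfy 0 < q₂ ≤ q₁ < 1 and q₂ − 1 = (q₂/q₁)(q₁ − 1) e^{αt}. Then for every measurable function f : ℝ^n → ℝ with 0 < a ≤ f ≤ b for some constants a, b, one has ( ∫_{ℝ^n} f(x)^{q₁} K^α_{1/α}(x) dx )^{1/q₁} ≤ ( ∫_{ℝ^n} ( P^{LOU}_t f (x) )^{q₂} K^α_{1/α}(x) dx )^{1/q₂} (reverse hypercontractive bound for the Lévy–Ornstein–Uhlenbeck semigroup driven by an α-stable process, whose invariant measure K^α_{1/α}(x)dx is not reversible). -/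

import Mathlib

open MeasureTheory Real
open scoped RealInnerProductSpace

/-- The `α`-stable kernel `K_t^α` on `ℝ^n`, defined through its Fourier transform. -/
noncomputable def stableKernel (n : ℕ) (α t : ℝ) (x : EuclideanSpace ℝ (Fin n)) : ℝ :=
  (2 * π) ^ (-(n : ℝ)) *
    ∫ ξ : EuclideanSpace ℝ (Fin n),
      (Complex.exp ((⟪x, ξ⟫ : ℂ) * Complex.I - ((t * ‖ξ‖ ^ α : ℝ) : ℂ))).re

/-- The `α`-stable semigroup `L_t^α f = K_t^α ∗ f`, with `L_0^α f = f`. -/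
noncomputable def stableSemigroup (n : ℕ) (α t : ℝ) (f : EuclideanSpace ℝ (Fin n) → ℝ)
    (x : EuclideanSpace ℝ (Fin n)) : ℝ :=
  if t = 0 then f x else ∫ y, stableKernel n α t (x - y) * f y

/-- The Lévy-Ornstein-Uhlenbeck semigroup driven by an `α`-stable process. -/
noncomputable def LOU (n : ℕ) (α t : ℝ) (f : EuclideanSpace ℝ (Fin n) → ℝ)
    (x : EuclideanSpace ℝ (Fin n)) : ℝ :=
  stableSemigroup n α ((1 - Real.exp (-α * t)) / α) f (Real.exp (-t) • x)

/-!
Minkowski's integral inequality says that, for exponents `r ≤ s` and a fixed measure, the `s`-mean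
of the `r`-mean is at most the `r`-mean of the `s`-mean. Moving the means past each other and
averaging with Hölder, as in Pascal's triangle, bounds the `(k + m)`-fold iterated `p`-mean by the
`k`-fold `r`-mean of the `m`-fold `s`-mean when `(k + m) / p = k / r + m / s`. Along a convolution
semigroup the `k`-fold mean at time `δ` is the mean at time `k δ`, which gives the inequality for
commensurable times and then, by perturbing the exponent, for all times. Reverse hypercontractivity
is the case `s = 1`: dilation by `e^{-t}` carries the stable law at time `1/α` to the one at time
`e^{-αt}/α`, and `1/α = e^{-αt}/α + (1 - e^{-αt})/α`.

That the stable kernel is a probability density rests on the binomial coefficients in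
`1 - (1 - z)^{α/2}` being nonnegative: `1 - (1 - e^{-u|ξ|²})^{α/2}` is then the characteristic
function of a mixture of Gaussians, and its `N`-th powers, with `u` of order `N^{-2/α}`, converge to
`e^{-t|ξ|^α}`.
-/

open Filter Topology
open scoped ENNReal FourierTransform

section Minkowski

variable {X Y : Type*} [MeasurableSpace X] [MeasurableSpace Y] {μ : Measure X} {ν : Measure Y}

theorem exists_measurable_le_lintegral_lt_top_of_lt_lintegral [SigmaFinite μ] {f : X → ℝ≥0∞}
    {L : ℝ≥0∞} (hL : L < ∫⁻ x, f x ∂μ) :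
    ∃ g, Measurable g ∧ g ≤ f ∧ ∫⁻ x, g x ∂μ < ∞ ∧ L < ∫⁻ x, g x ∂μ := by
  rw [lintegral_eq_nnreal] at hL
  obtain ⟨φ, hφ⟩ := lt_iSup_iff.1 hL
  obtain ⟨hφf, hLφ⟩ := lt_iSup_iff.1 hφ
  rw [← SimpleFunc.lintegral_eq_lintegral] at hLφ
  obtain ⟨g, hgφ, hg, hLg⟩ := SimpleFunc.exists_lt_lintegral_simpleFunc_of_lt_lintegral hLφ
  exact ⟨fun x => g x, g.measurable.coe_nnreal_ennreal,
    fun x => (ENNReal.coe_le_coe.2 (hgφ x)).trans (hφf x), hg, hLg⟩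

theorem lintegral_rpow_rpow_le_of_le_lintegral [SFinite μ] [SFinite ν] {h : X → Y → ℝ≥0∞}
    (hh : Measurable (Function.uncurry h)) {G : X → ℝ≥0∞} (hG : Measurable G)
    (hGh : ∀ x, G x ≤ ∫⁻ y, h x y ∂ν) {p : ℝ} (hp : 1 ≤ p) (hfin : ∫⁻ x, G x ^ p ∂μ ≠ ∞) :
    (∫⁻ x, G x ^ p ∂μ) ^ (1 / p) ≤ ∫⁻ y, (∫⁻ x, h x y ^ p ∂μ) ^ (1 / p) ∂ν := by
  have hp₀ : 0 < p := one_pos.trans_le hp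
  have hp' : 0 ≤ 1 - 1 / p := sub_nonneg.2 ((div_le_one hp₀).2 hp)
  set S := ∫⁻ x, G x ^ p ∂μ
  rcases eq_or_ne S 0 with hS₀ | hS₀
  · simp [hS₀, hp₀]
  have hself : S ≤ (∫⁻ y, (∫⁻ x, h x y ^ p ∂μ) ^ (1 / p) ∂ν) * S ^ (1 - 1 / p) := by
    calc S ≤ ∫⁻ x, ∫⁻ y, h x y * G x ^ (p - 1) ∂ν ∂μ := by
          refine lintegral_mono fun x => ?_
          have hx : Measurable (h x) := hh.comp measurable_prodMk_left
          rw [lintegral_mul_const _ hx]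
          calc G x ^ p = G x * G x ^ (p - 1) := by
                nth_rw 2 [← ENNReal.rpow_one (G x)]
                rw [← ENNReal.rpow_add_of_nonneg _ _ zero_le_one (by linarith), add_sub_cancel]
            _ ≤ _ := by gcongr; exact hGh x
      _ = ∫⁻ y, ∫⁻ x, (h x y ^ p) ^ (1 / p) * (G x ^ p) ^ (1 - 1 / p) ∂μ ∂ν := by
          have hexp : p * (1 - 1 / p) = p - 1 := by field_simp
          simp only [← ENNReal.rpow_mul, mul_one_div_cancel hp₀.ne', ENNReal.rpow_one, hexp]
          exact lintegral_lintegral_swap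
            (hh.mul ((hG.comp measurable_fst).pow_const _)).aemeasurable
      _ ≤ ∫⁻ y, (∫⁻ x, h x y ^ p ∂μ) ^ (1 / p) * S ^ (1 - 1 / p) ∂ν :=
          lintegral_mono fun y => ENNReal.lintegral_mul_norm_pow_le
            ((hh.comp measurable_prodMk_right).pow_const p).aemeasurable
            (hG.pow_const p).aemeasurable (by positivity) hp' (by ring)
      _ = _ := lintegral_mul_const _ ((hh.pow_const p).lintegral_prod_left'.pow_const _)
  refine (ENNReal.mul_le_mul_iff_left (c := S ^ (1 - 1 / p)) ?_ ?_).1 ?_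
  · simp [ENNReal.rpow_eq_zero_iff, hS₀, hfin]
  · simp [ENNReal.rpow_eq_top_iff, hS₀, hfin]
  · rw [← ENNReal.rpow_add _ _ hS₀ hfin]
    simpa using hself

theorem lintegral_lintegral_rpow_rpow_le [SigmaFinite μ] [SFinite ν] {h : X → Y → ℝ≥0∞}
    (hh : Measurable (Function.uncurry h)) {p : ℝ} (hp : 1 ≤ p) :
    (∫⁻ x, (∫⁻ y, h x y ∂ν) ^ p ∂μ) ^ (1 / p) ≤ ∫⁻ y, (∫⁻ x, h x y ^ p ∂μ) ^ (1 / p) ∂ν := by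
  have hp₀ : 0 < p := one_pos.trans_le hp
  rw [one_div, ENNReal.rpow_inv_le_iff hp₀]
  refine le_of_forall_lt fun L hL => ?_
  obtain ⟨g, hg, hgh, hfin, hLg⟩ := exists_measurable_le_lintegral_lt_top_of_lt_lintegral hL
  have hroot : ∀ x, (g x ^ p⁻¹) ^ p = g x := fun x => ENNReal.rpow_inv_rpow hp₀.ne' _
  have hle := lintegral_rpow_rpow_le_of_le_lintegral (μ := μ) (G := fun x => g x ^ p⁻¹) hh
    (hg.pow_const _) (fun x => (ENNReal.rpow_inv_le_iff hp₀).2 (hgh x)) hp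
    (by simpa only [hroot] using hfin.ne)
  simp only [hroot, one_div] at hle
  exact hLg.trans_le ((ENNReal.rpow_inv_le_iff hp₀).1 hle)

end Minkowski

section PowerMean

variable {E : Type*} [AddCommMonoid E] [MeasurableSpace E]

/-- The power mean of exponent `p`, with respect to `μ`, of the translate of `g` by `x`, as a
function of `x`. -/
noncomputable def powerMean (μ : Measure E) (p : ℝ) (g : E → ℝ≥0∞) (x : E) : ℝ≥0∞ :=
  (∫⁻ y, g (x + y) ^ p ∂μ) ^ (1 / p)

theorem monotone_powerMean (μ : Measure E) {p : ℝ} (hp : 0 < p) : Monotone (powerMean μ p) :=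
  fun _ _ hgh _ => ENNReal.rpow_le_rpow
    (lintegral_mono fun _ => ENNReal.rpow_le_rpow (hgh _) hp.le) (by positivity)

theorem powerMean_rpow (μ : Measure E) {p : ℝ} (hp : 0 < p) (g : E → ℝ≥0∞) (x : E) :
    powerMean μ p g x ^ p = ∫⁻ y, g (x + y) ^ p ∂μ := by
  rw [powerMean, one_div, ENNReal.rpow_inv_rpow hp.ne']

theorem powerMean_le_rpow_mul_rpow_of_le_const (μ : Measure E) {p q : ℝ} (hp : 0 < p)
    (hpq : p ≤ q) {g : E → ℝ≥0∞} {b : ℝ≥0∞} (hb : b ≠ ∞) (hgb : ∀ x, g x ≤ b) (x : E) :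
    powerMean μ q g x ≤ powerMean μ p g x ^ (p / q) * b ^ (1 - p / q) := by
  have hq : 0 < q := hp.trans_le hpq
  have hqp : 0 ≤ q - p := sub_nonneg.2 hpq
  have hle : ∫⁻ y, g (x + y) ^ q ∂μ ≤ (∫⁻ y, g (x + y) ^ p ∂μ) * b ^ (q - p) := by
    rw [← lintegral_mul_const' _ _ (ENNReal.rpow_ne_top_of_nonneg hqp hb)]
    refine lintegral_mono fun y => ?_
    rw [← add_sub_cancel p q, ENNReal.rpow_add_of_nonneg _ _ hp.le hqp, add_sub_cancel_left]
    gcongr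
    exact hgb _
  have h₁ : 1 / p * (p / q) = 1 / q := by field_simp
  have h₂ : (q - p) * (1 / q) = 1 - p / q := by field_simp
  have hq' : 0 ≤ 1 / q := by positivity
  simpa only [powerMean, ← ENNReal.rpow_mul, ENNReal.mul_rpow_of_nonneg _ _ hq', h₁, h₂]
    using ENNReal.rpow_le_rpow hle hq'

variable [MeasurableAdd₂ E]

@[fun_prop]
theorem measurable_powerMean (μ : Measure E) [SFinite μ] (p : ℝ) {g : E → ℝ≥0∞}
    (hg : Measurable g) : Measurable (powerMean μ p g) :=
  ((hg.comp measurable_add).pow_const p).lintegral_prod_right'.pow_const _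

theorem powerMean_powerMean (μ ν : Measure E) [SFinite μ] [SFinite ν] {p : ℝ} (hp : 0 < p)
    {g : E → ℝ≥0∞} (hg : Measurable g) :
    powerMean μ p (powerMean ν p g) = powerMean (μ ∗ ν) p g := by
  funext x
  have hgx : Measurable fun y => g (x + y) ^ p := (hg.comp (measurable_const_add x)).pow_const p
  rw [powerMean, powerMean, Measure.lintegral_conv hgx]
  simp only [powerMean_rpow ν hp, add_assoc]

theorem powerMean_powerMean_le (μ ν : Measure E) [SigmaFinite μ] [SFinite ν] {r s : ℝ}
    (hr : 0 < r) (hrs : r ≤ s) {g : E → ℝ≥0∞} (hg : Measurable g) :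
    powerMean μ s (powerMean ν r g) ≤ powerMean ν r (powerMean μ s g) := fun x => by
  have hs : 0 < s := hr.trans_le hrs
  have hh : Measurable (Function.uncurry fun y z => g (x + y + z) ^ r) :=
    (hg.comp ((measurable_fst.const_add x).add measurable_snd)).pow_const r
  have hmink := ENNReal.rpow_le_rpow
    (lintegral_lintegral_rpow_rpow_le (μ := μ) (ν := ν) hh ((one_le_div hr).2 hrs))
    (by positivity : 0 ≤ 1 / r)
  have h₁ : r * (s / r) = s := by field_simp
  have h₂ : 1 / (s / r) * (1 / r) = 1 / s := by field_simp
  have h₃ : 1 / s * r = 1 / (s / r) := by field_simp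
  have h₄ : 1 / r * s = s / r := by field_simp
  simpa only [powerMean, ← ENNReal.rpow_mul, h₁, h₂, h₃, h₄, add_right_comm x] using hmink

theorem powerMean_le_powerMean_of_exponent_le (μ : Measure E) [IsProbabilityMeasure μ] {p q : ℝ}
    (hp : 0 < p) (hpq : p ≤ q) {g : E → ℝ≥0∞} (hg : Measurable g) :
    powerMean μ p g ≤ powerMean μ q g := fun x => by
  simpa [eLpNorm', powerMean] using eLpNorm'_le_eLpNorm'_of_exponent_le hp hpq μ
    (hg.comp (measurable_const_add x)).aestronglyMeasurable

theorem powerMean_rpow_mul_rpow_le (μ : Measure E) {p a b v w : ℝ} (hp : 0 < p) (ha : 0 < a)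
    (hb : 0 < b) (hv : 0 ≤ v) (hw : 0 ≤ w) (hrel : 1 / p = v / a + w / b) {f g : E → ℝ≥0∞}
    (hf : Measurable f) (hg : Measurable g) (x : E) :
    powerMean μ p (fun y => f y ^ v * g y ^ w) x ≤
      powerMean μ a f x ^ v * powerMean μ b g x ^ w := by
  have hholder := ENNReal.rpow_le_rpow
    (ENNReal.lintegral_mul_norm_pow_le (μ := μ) (f := fun y => f (x + y) ^ a)
      (g := fun y => g (x + y) ^ b) (p := p * (v / a)) (q := p * (w / b))
      ((hf.comp (measurable_const_add x)).pow_const a).aemeasurable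
      ((hg.comp (measurable_const_add x)).pow_const b).aemeasurable
      (by positivity) (by positivity) (by rw [← mul_add, ← hrel, mul_one_div_cancel hp.ne']))
    (by positivity : 0 ≤ 1 / p)
  have h₁ : a * (p * (v / a)) = v * p := by field_simp
  have h₂ : b * (p * (w / b)) = w * p := by field_simp
  have h₃ : p * (v / a) * (1 / p) = 1 / a * v := by field_simp
  have h₄ : p * (w / b) * (1 / p) = 1 / b * w := by field_simp
  rw [ENNReal.mul_rpow_of_nonneg _ _ (by positivity : 0 ≤ 1 / p)] at hholder
  simpa only [powerMean, ENNReal.mul_rpow_of_nonneg _ _ hp.le, ← ENNReal.rpow_mul, h₁, h₂, h₃, h₄]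
    using hholder

end PowerMean

section IteratedPowerMean

variable {E : Type*} [AddCommMonoid E] [MeasurableSpace E] [MeasurableAdd₂ E]

theorem measurable_iterate_powerMean (μ : Measure E) [SFinite μ] (p : ℝ) (n : ℕ) {g : E → ℝ≥0∞}
    (hg : Measurable g) : Measurable ((powerMean μ p)^[n] g) := by
  induction n with
  | zero => exact hg
  | succ n ih => rw [Function.iterate_succ_apply']; exact measurable_powerMean μ p ih

theorem powerMean_iterate_powerMean_le (μ : Measure E) [SigmaFinite μ] {r s : ℝ} (hr : 0 < r)
    (hrs : r ≤ s) (k : ℕ) {g : E → ℝ≥0∞} (hg : Measurable g) :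
    powerMean μ s ((powerMean μ r)^[k] g) ≤ (powerMean μ r)^[k] (powerMean μ s g) := by
  induction k with
  | zero => exact le_rfl
  | succ k ih =>
    simp only [Function.iterate_succ_apply']
    exact (powerMean_powerMean_le μ μ hr hrs (measurable_iterate_powerMean μ r k hg)).trans
      (monotone_powerMean μ hr ih)

theorem iterate_powerMean_le_rpow_mul_rpow (μ : Measure E) [SFinite μ] {p a b v w : ℝ} (hp : 0 < p)
    (ha : 0 < a) (hb : 0 < b) (hv : 0 ≤ v) (hw : 0 ≤ w) (hvw : v + w = 1)
    (hrel : 1 / p = v / a + w / b) (n : ℕ) {g : E → ℝ≥0∞} (hg : Measurable g) (x : E) :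
    (powerMean μ p)^[n] g x ≤ (powerMean μ a)^[n] g x ^ v * (powerMean μ b)^[n] g x ^ w := by
  induction n generalizing x with
  | zero => simp [← ENNReal.rpow_add_of_nonneg _ _ hv hw, hvw]
  | succ n ih =>
    simp only [Function.iterate_succ_apply']
    exact (monotone_powerMean μ hp ih x).trans (powerMean_rpow_mul_rpow_le μ hp ha hb hv hw hrel
      (measurable_iterate_powerMean μ a n hg) (measurable_iterate_powerMean μ b n hg) x)

theorem iterate_powerMean_succ_le (μ : Measure E) [SigmaFinite μ] {p r s v w a b : ℝ} (hp : 0 < p)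
    (hr : 0 < r) (hrs : r ≤ s) (ha : 0 < a) (hb : 0 < b) (hv : 0 ≤ v) (hw : 0 ≤ w) (hvw : v + w = 1)
    (hrel : 1 / p = v / r + w / s) (hrel' : 1 / p = v / a + w / b) {n k : ℕ}
    {g h : E → ℝ≥0∞} (hg : Measurable g) (hh : Measurable h)
    (hA : (powerMean μ a)^[n] g ≤ (powerMean μ r)^[k] (powerMean μ s h))
    (hB : (powerMean μ b)^[n] g ≤ (powerMean μ r)^[k + 1] h) :
    (powerMean μ p)^[n + 1] g ≤ (powerMean μ r)^[k + 1] (powerMean μ s h) := fun x => by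
  have hs : 0 < s := hr.trans_le hrs
  set F := (powerMean μ r)^[k + 1] (powerMean μ s h) with hF
  have hrA : powerMean μ r ((powerMean μ a)^[n] g) ≤ F := by
    rw [hF, Function.iterate_succ_apply']
    exact monotone_powerMean μ hr hA
  have hsB : powerMean μ s ((powerMean μ b)^[n] g) ≤ F :=
    (monotone_powerMean μ hs hB).trans (powerMean_iterate_powerMean_le μ hr hrs _ hh)
  calc (powerMean μ p)^[n + 1] g x
      = powerMean μ p ((powerMean μ p)^[n] g) x := by rw [Function.iterate_succ_apply']
    _ ≤ powerMean μ p (fun y => (powerMean μ a)^[n] g y ^ v * (powerMean μ b)^[n] g y ^ w) x :=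
      monotone_powerMean μ hp
        (iterate_powerMean_le_rpow_mul_rpow μ hp ha hb hv hw hvw hrel' n hg) x
    _ ≤ powerMean μ r ((powerMean μ a)^[n] g) x ^ v *
          powerMean μ s ((powerMean μ b)^[n] g) x ^ w :=
      powerMean_rpow_mul_rpow_le μ hp hr hs hv hw hrel
        (measurable_iterate_powerMean μ a n hg) (measurable_iterate_powerMean μ b n hg) x
    _ ≤ F x ^ v * F x ^ w := by gcongr <;> [exact hrA x; exact hsB x]
    _ = F x := by rw [← ENNReal.rpow_add_of_nonneg _ _ hv hw, hvw, ENNReal.rpow_one]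

theorem eq_of_natCast_succ_div_eq {n : ℕ} {p q : ℝ} (h : (n + 1) / p = (n + 1) / q) : p = q := by
  have hn : (n : ℝ) + 1 ≠ 0 := n.cast_add_one_ne_zero
  simpa [div_eq_mul_inv, hn] using h

theorem one_div_eq_of_pascal_rel {k m p r s a b : ℝ} (hkm : 0 < k + m + 1) (hr : r ≠ 0)
    (hs : s ≠ 0) (hp : (k + m + 2) / p = (k + 1) / r + (m + 1) / s)
    (ha : (k + m + 1) / a = k / r + (m + 1) / s) (hb : (k + m + 1) / b = (k + 1) / r + m / s) :
    1 / p = (k + 1) / (k + m + 2) / a + (m + 1) / (k + m + 2) / b := by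
  have hkm' : 0 < k + m + 2 := by linarith
  have hp' : 1 / p = ((k + 1) / r + (m + 1) / s) / (k + m + 2) := by rw [← hp]; field_simp
  have ha' : 1 / a = (k / r + (m + 1) / s) / (k + m + 1) := by rw [← ha]; field_simp
  have hb' : 1 / b = ((k + 1) / r + m / s) / (k + m + 1) := by rw [← hb]; field_simp
  rw [div_eq_mul_one_div _ a, div_eq_mul_one_div _ b, hp', ha', hb']
  field_simp
  ring

theorem iterate_powerMean_le_iterate_iterate (μ : Measure E) [SigmaFinite μ] {r s : ℝ}
    (hr : 0 < r) (hrs : r ≤ s) (k m : ℕ) {p : ℝ} (hp : 0 < p)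
    (hrel : (k + m) / p = k / r + m / s) {g : E → ℝ≥0∞} (hg : Measurable g) :
    (powerMean μ p)^[k + m] g ≤ (powerMean μ r)^[k] ((powerMean μ s)^[m] g) := by
  have hs : 0 < s := hr.trans_le hrs
  induction k generalizing m p with
  | zero =>
    rcases m with - | m
    · exact le_rfl
    · obtain rfl : p = s := eq_of_natCast_succ_div_eq (by simpa using hrel)
      simp
  | succ k ihk =>
    induction m generalizing p with
    | zero =>
      obtain rfl : p = r := eq_of_natCast_succ_div_eq (by simpa using hrel)
      exact le_rfl
    | succ m ihm =>
      obtain ⟨a, ha, hka⟩ : ∃ a > 0, ((k : ℝ) + m + 1) / a = k / r + (m + 1) / s :=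
        ⟨(k + m + 1) / (k / r + (m + 1) / s), by positivity, div_div_cancel₀ (by positivity)⟩
      obtain ⟨b, hb, hkb⟩ : ∃ b > 0, ((k : ℝ) + m + 1) / b = (k + 1) / r + m / s :=
        ⟨(k + m + 1) / ((k + 1) / r + m / s), by positivity, div_div_cancel₀ (by positivity)⟩
      have hA := ihk (m + 1) ha (by push_cast; rw [← hka, add_assoc])
      have hB := ihm hb (by push_cast; rw [← hkb]; ring)
      rw [show k + (m + 1) = k + 1 + m by ring, Function.iterate_succ_apply'] at hA
      rw [← add_assoc, Function.iterate_succ_apply' _ m]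
      push_cast at hrel
      refine iterate_powerMean_succ_le μ (v := (k + 1) / (k + m + 2)) (w := (m + 1) / (k + m + 2))
        hp hr hrs ha hb (by positivity) (by positivity) ?_ ?_ ?_ hg
        (measurable_iterate_powerMean μ s m hg) hA hB
      · field_simp; ring
      · field_simp at hrel ⊢
        linear_combination hrel
      · exact one_div_eq_of_pascal_rel (by positivity) hr.ne' hs.ne' (by rw [← hrel]; ring) hka hkb

end IteratedPowerMean

section ConvolutionSemigroup

/-- A family of probability measures `μ t`, `t > 0`, with `μ s ∗ μ t = μ (s + t)`; nothing is
required of `μ t` for `t ≤ 0`. -/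
structure IsConvolutionSemigroup {E : Type*} [AddMonoid E] [MeasurableSpace E]
    (μ : ℝ → Measure E) : Prop where
  isProbabilityMeasure : ∀ t > 0, IsProbabilityMeasure (μ t)
  conv : ∀ s > 0, ∀ t > 0, μ s ∗ μ t = μ (s + t)

theorem tendsto_rpow_mul_rpow_one_sub {a b : ℝ≥0∞} (ha : a ≠ ∞) (hb₀ : b ≠ 0) (hb : b ≠ ∞) :
    Tendsto (fun θ : ℝ => a ^ θ * b ^ (1 - θ)) (𝓝 1) (𝓝 a) := by
  lift a to NNReal using ha
  lift b to NNReal using hb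
  have hb₀' : b ≠ 0 := by exact_mod_cast hb₀
  have hab : ContinuousAt (fun θ : ℝ => a ^ θ * b ^ (1 - θ)) 1 := by
    refine .mul ?_ ?_
    · exact ContinuousAt.comp (f := fun θ : ℝ => (a, θ))
        (NNReal.continuousAt_rpow (.inr one_pos)) (by fun_prop)
    · exact ContinuousAt.comp (f := fun θ : ℝ => (b, 1 - θ))
        (NNReal.continuousAt_rpow (.inl hb₀')) (by fun_prop)
  have hlim : Tendsto (fun θ : ℝ => ((a ^ θ * b ^ (1 - θ) : NNReal) : ℝ≥0∞)) (𝓝 1) (𝓝 a) := by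
    simpa using ENNReal.tendsto_coe.2 hab.tendsto
  refine hlim.congr' ?_
  filter_upwards [lt_mem_nhds one_pos] with θ hθ
  rw [ENNReal.coe_mul, ENNReal.coe_rpow_of_nonneg _ hθ.le, ENNReal.coe_rpow_of_ne_zero hb₀']

theorem powerMean_le_of_le_const {E : Type*} [AddCommMonoid E] [MeasurableSpace E] (μ : Measure E)
    [IsProbabilityMeasure μ] {p : ℝ} (hp : 0 < p) {g : E → ℝ≥0∞} {b : ℝ≥0∞} (hgb : ∀ x, g x ≤ b)
    (x : E) : powerMean μ p g x ≤ b := by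
  refine (monotone_powerMean μ hp hgb x).trans_eq ?_
  simp only [powerMean, lintegral_const, measure_univ, mul_one, one_div,
    ENNReal.rpow_rpow_inv hp.ne']

theorem powerMean_iSup {E : Type*} [AddCommMonoid E] [MeasurableSpace E] [MeasurableAdd E]
    (μ : Measure E) {p : ℝ} (hp : 0 < p) {g : ℕ → E → ℝ≥0∞} (hg : ∀ n, Measurable (g n))
    (hmono : Monotone g) (x : E) :
    powerMean μ p (fun y => ⨆ n, g n y) x = ⨆ n, powerMean μ p (g n) x := by
  have hrpow : ∀ {q : ℝ}, 0 < q → ∀ u : ℕ → ℝ≥0∞, (⨆ n, u n) ^ q = ⨆ n, u n ^ q :=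
    fun hq u => (ENNReal.orderIsoRpow _ hq).map_iSup u
  have hmeas : ∀ n, Measurable fun y => g n (x + y) ^ p :=
    fun n => ((hg n).comp (measurable_const_add x)).pow_const p
  simp only [powerMean, hrpow hp]
  rw [lintegral_iSup hmeas fun m n hmn y => ENNReal.rpow_le_rpow (hmono hmn _) hp.le,
    hrpow (by positivity)]

namespace IsConvolutionSemigroup

variable {E : Type*} [AddCommMonoid E] [MeasurableSpace E] [MeasurableAdd₂ E]
  {μ : ℝ → Measure E} (hμ : IsConvolutionSemigroup μ)
include hμ

theorem powerMean_powerMean_eq {s t : ℝ} (hs : 0 < s) (ht : 0 < t) {p : ℝ} (hp : 0 < p)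
    {g : E → ℝ≥0∞} (hg : Measurable g) :
    powerMean (μ s) p (powerMean (μ t) p g) = powerMean (μ (s + t)) p g := by
  have := hμ.isProbabilityMeasure s hs
  have := hμ.isProbabilityMeasure t ht
  rw [powerMean_powerMean _ _ hp hg, hμ.conv s hs t ht]

theorem iterate_powerMean {δ : ℝ} (hδ : 0 < δ) {p : ℝ} (hp : 0 < p) {g : E → ℝ≥0∞}
    (hg : Measurable g) (k : ℕ) :
    (powerMean (μ δ) p)^[k + 1] g = powerMean (μ ((k + 1) * δ)) p g := by
  induction k with
  | zero => simp
  | succ k ih =>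
    rw [Function.iterate_succ_apply', ih, hμ.powerMean_powerMean_eq hδ (by positivity) hp hg]
    congr 2
    push_cast
    ring

theorem powerMean_le_powerMean_powerMean_of_nat {δ : ℝ} (hδ : 0 < δ) {k m : ℕ} (hk : k ≠ 0)
    (hm : m ≠ 0) {p r s : ℝ} (hp : 0 < p) (hr : 0 < r) (hrs : r ≤ s)
    (hrel : (k + m) / p = k / r + m / s) {g : E → ℝ≥0∞} (hg : Measurable g) :
    powerMean (μ ((k + m) * δ)) p g ≤ powerMean (μ (k * δ)) r (powerMean (μ (m * δ)) s g) := by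
  have := hμ.isProbabilityMeasure δ hδ
  have hs : 0 < s := hr.trans_le hrs
  have hle := iterate_powerMean_le_iterate_iterate (μ δ) hr hrs k m hp hrel hg
  obtain ⟨k, rfl⟩ := Nat.exists_eq_add_one_of_ne_zero hk
  obtain ⟨m, rfl⟩ := Nat.exists_eq_add_one_of_ne_zero hm
  have hgm := measurable_iterate_powerMean (μ δ) s (m + 1) hg
  rw [← add_assoc, hμ.iterate_powerMean hδ hp hg, hμ.iterate_powerMean hδ hr hgm,
    hμ.iterate_powerMean hδ hs hg] at hle
  push_cast at hle ⊢
  simpa only [add_assoc] using hle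

theorem powerMean_le_powerMean_powerMean_of_rat {T : ℝ} (hT : 0 < T) {ρ : ℚ} (hρ : 0 < ρ)
    (hρ₁ : ρ < 1) {p q s : ℝ} (hp : 0 < p) (hq : 0 < q) (hqs : q ≤ s)
    (hrel : 1 / p = ρ / q + (1 - ρ) / s) {g : E → ℝ≥0∞} (hg : Measurable g) :
    powerMean (μ T) p g ≤ powerMean (μ (ρ * T)) q (powerMean (μ (T - ρ * T)) s g) := by
  obtain ⟨k, hk⟩ := Int.eq_ofNat_of_zero_le (Rat.num_pos.2 hρ).le
  have hkρ : (k : ℚ) = ρ.den * ρ := by rw [Rat.den_mul_eq_num, hk]; rfl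
  have hk₀ : 0 < k := by exact_mod_cast hkρ.symm ▸ mul_pos (by exact_mod_cast ρ.den_pos) hρ
  have hkN : k < ρ.den := by
    exact_mod_cast hkρ.trans_lt (mul_lt_of_lt_one_right (by exact_mod_cast ρ.den_pos) hρ₁)
  obtain ⟨m, hm₀, hm⟩ := exists_pos_add_of_lt' hkN
  have hN : (0 : ℝ) < k + m := by positivity
  have hρ' : (ρ : ℝ) = k / (k + m) := by
    rw [eq_div_iff hN.ne', mul_comm]
    exact_mod_cast (hm ▸ hkρ).symm
  have hle := hμ.powerMean_le_powerMean_powerMean_of_nat (div_pos hT hN) hk₀.ne' hm₀.ne' hp hq hqs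
    (by rw [hρ'] at hrel; field_simp at hrel ⊢; linear_combination hrel) hg
  have h₁ : (k + m) * (T / (k + m)) = T := by field_simp
  have h₂ : k * (T / (k + m)) = ρ * T := by rw [hρ']; ring
  have h₃ : m * (T / (k + m)) = T - ρ * T := by rw [hρ']; field_simp; ring
  rwa [h₁, h₂, h₃] at hle

theorem powerMean_powerMean_le_of_lt {r R T : ℝ} (hr : 0 < r) (hrR : r < R) (hRT : R < T)
    {q s : ℝ} (hq : 0 < q) (hqs : q ≤ s) {g : E → ℝ≥0∞} (hg : Measurable g) :
    powerMean (μ R) q (powerMean (μ (T - R)) s g) ≤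
      powerMean (μ r) q (powerMean (μ (T - r)) s g) := by
  have hrR' : 0 < R - r := sub_pos.2 hrR
  have hRT' : 0 < T - R := sub_pos.2 hRT
  have := hμ.isProbabilityMeasure _ hrR'
  have := hμ.isProbabilityMeasure _ hRT'
  have hm : Measurable (powerMean (μ (T - R)) s g) := measurable_powerMean _ s hg
  calc powerMean (μ R) q (powerMean (μ (T - R)) s g)
      = powerMean (μ r) q (powerMean (μ (R - r)) q (powerMean (μ (T - R)) s g)) := by
        rw [hμ.powerMean_powerMean_eq hr hrR' hq hm, add_sub_cancel]
    _ ≤ powerMean (μ r) q (powerMean (μ (R - r)) s (powerMean (μ (T - R)) s g)) :=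
        monotone_powerMean _ hq (powerMean_le_powerMean_of_exponent_le _ hq hqs hm)
    _ = powerMean (μ r) q (powerMean (μ (T - r)) s g) := by
        rw [hμ.powerMean_powerMean_eq hrR' hRT' (hq.trans_le hqs) hg, sub_add_sub_comm,
          add_comm R T, add_sub_add_right_eq_sub]

-- `q / θ` is the exponent for which the relation `hrel` holds with `ρ * T` in place of `r`.
theorem powerMean_le_rpow_mul_rpow_of_rat {r T : ℝ} (hr : 0 < r) (hT : 0 < T) {ρ : ℚ}
    (hρ : r < ρ * T) (hρ₁ : ρ < 1) {p q s : ℝ} (hp : 0 < p) (hq : 0 < q) (hqs : q ≤ s)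
    (hrel : T / p = r / q + (T - r) / s) {θ : ℝ} (hθ : θ = q / s + r / (ρ * T) * (1 - q / s))
    {g : E → ℝ≥0∞} (hg : Measurable g) {b : ℝ≥0∞} (hb : b ≠ ∞) (hgb : ∀ x, g x ≤ b) (x : E) :
    powerMean (μ T) p g x ≤
      powerMean (μ r) q (powerMean (μ (T - r)) s g) x ^ θ * b ^ (1 - θ) := by
  have hs : 0 < s := hq.trans_le hqs
  have hqs₁ : 0 ≤ 1 - q / s := sub_nonneg.2 ((div_le_one hs).2 hqs)
  have hρT : 0 < ρ * T := hr.trans hρ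
  have hρ₀ : (0 : ℝ) < ρ := pos_of_mul_pos_left hρT hT.le
  have hρT₁ : ρ * T < T := mul_lt_of_lt_one_left hT (by exact_mod_cast hρ₁)
  have hθ₀ : 0 < θ := by rw [hθ]; positivity
  have hqθ : q ≤ q / θ := by
    have : r / (ρ * T) ≤ 1 := (div_le_one hρT).2 hρ.le
    rw [le_div_iff₀ hθ₀, hθ]
    nlinarith [mul_le_mul_of_nonneg_right this hqs₁]
  have hθs : q / θ ≤ s := by
    rw [div_le_iff₀ hθ₀, ← div_le_iff₀' hs, hθ]
    exact le_add_of_nonneg_right (by positivity)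
  have := hμ.isProbabilityMeasure (T - r) (sub_pos.2 (hρ.trans hρT₁))
  have hgb' : ∀ y, powerMean (μ (T - r)) s g y ≤ b := powerMean_le_of_le_const _ hs hgb
  calc powerMean (μ T) p g x
      ≤ powerMean (μ (ρ * T)) (q / θ) (powerMean (μ (T - ρ * T)) s g) x :=
        hμ.powerMean_le_powerMean_powerMean_of_rat hT (by exact_mod_cast hρ₀) hρ₁ hp
          (by positivity) hθs (by rw [hθ]; field_simp at hrel ⊢; linear_combination hrel) hg x
    _ ≤ powerMean (μ r) (q / θ) (powerMean (μ (T - r)) s g) x :=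
        hμ.powerMean_powerMean_le_of_lt hr hρ hρT₁ (by positivity) hθs hg x
    _ ≤ _ := by
        simpa only [div_div_cancel₀ hq.ne'] using
          powerMean_le_rpow_mul_rpow_of_le_const (μ r) hq hqθ hb hgb' x

theorem powerMean_le_powerMean_powerMean_of_le_const {r T : ℝ} (hr : 0 < r) (hrT : r < T)
    {p q s : ℝ} (hp : 0 < p) (hq : 0 < q) (hqs : q ≤ s) (hrel : T / p = r / q + (T - r) / s)
    {g : E → ℝ≥0∞} (hg : Measurable g) {b : ℝ≥0∞} (hb₀ : b ≠ 0) (hb : b ≠ ∞)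
    (hgb : ∀ x, g x ≤ b) :
    powerMean (μ T) p g ≤ powerMean (μ r) q (powerMean (μ (T - r)) s g) := fun x => by
  have hT : 0 < T := hr.trans hrT
  have hs : 0 < s := hq.trans_le hqs
  have := hμ.isProbabilityMeasure r hr
  have := hμ.isProbabilityMeasure (T - r) (sub_pos.2 hrT)
  set A := powerMean (μ r) q (powerMean (μ (T - r)) s g) x
  have hAb : A ≤ b := powerMean_le_of_le_const _ hq (powerMean_le_of_le_const _ hs hgb) x
  obtain ⟨ρ, -, hρ, hρlim⟩ := Real.exists_seq_rat_strictAnti_tendsto (r / T)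
  have hθ : Tendsto (fun n => q / s + r / (ρ n * T) * (1 - q / s)) atTop (𝓝 1) := by
    have : Tendsto (fun n => r / (ρ n * T)) atTop (𝓝 1) := by
      have := (tendsto_const_nhds (x := r)).div (hρlim.mul_const T) (by field_simp; exact hr.ne')
      rwa [div_mul_cancel₀ _ hT.ne', div_self hr.ne'] at this
    simpa using (this.mul_const (1 - q / s)).const_add (q / s)
  refine ge_of_tendsto ((tendsto_rpow_mul_rpow_one_sub (ne_top_of_le_ne_top hb hAb) hb₀ hb).comp hθ)
    ?_
  filter_upwards [hρlim.eventually_lt_const ((div_lt_one hT).2 hrT)] with n hn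
  exact hμ.powerMean_le_rpow_mul_rpow_of_rat hr hT ((div_lt_iff₀ hT).1 (hρ n))
    (by exact_mod_cast hn) hp hq hqs hrel rfl hg hb hgb x

theorem powerMean_le_powerMean_powerMean {r T : ℝ} (hr : 0 < r) (hrT : r < T)
    {p q s : ℝ} (hp : 0 < p) (hq : 0 < q) (hqs : q ≤ s) (hrel : T / p = r / q + (T - r) / s)
    {g : E → ℝ≥0∞} (hg : Measurable g) :
    powerMean (μ T) p g ≤ powerMean (μ r) q (powerMean (μ (T - r)) s g) := fun x => by
  have hmeas : ∀ n : ℕ, Measurable fun y => min (g y) n := fun n => hg.min measurable_const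
  have hmono : Monotone fun (n : ℕ) y => min (g y) (n : ℝ≥0∞) := fun _ _ hmn _ =>
    min_le_min_left _ (by exact_mod_cast hmn)
  have hsup : (fun y => ⨆ n : ℕ, min (g y) n) = g := funext fun y => by
    simp only [← inf_iSup_eq, ENNReal.iSup_natCast, inf_top_eq]
  calc powerMean (μ T) p g x
      = ⨆ n : ℕ, powerMean (μ T) p (fun y => min (g y) n) x := by
        rw [← powerMean_iSup _ hp hmeas hmono, hsup]
    _ ≤ powerMean (μ r) q (powerMean (μ (T - r)) s g) x := iSup_le fun n =>
        (hμ.powerMean_le_powerMean_powerMean_of_le_const hr hrT hp hq hqs hrel (hmeas n)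
          (b := n + 1) (by simp) (by simp)
          (fun _ => (min_le_right _ _).trans le_self_add) x).trans
        (monotone_powerMean _ hq (monotone_powerMean _ (hq.trans_le hqs)
          fun y => min_le_left (g y) n) x)

end IsConvolutionSemigroup

end ConvolutionSemigroup

section BoundedFunctions

variable {E : Type*} [MeasurableSpace E]

theorem integrable_rpow_of_nonneg_of_le_const {ν : Measure E} [IsFiniteMeasure ν] {h : E → ℝ}
    (hh : Measurable h) {b : ℝ} (h₀ : ∀ x, 0 ≤ h x) (hb : ∀ x, h x ≤ b) {q : ℝ} (hq : 0 ≤ q) :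
    Integrable (fun x => h x ^ q) ν :=
  .of_mem_Icc 0 (b ^ q) (hh.pow_const q).aemeasurable
    (ae_of_all _ fun x => ⟨rpow_nonneg (h₀ x) q, rpow_le_rpow (h₀ x) (hb x) hq⟩)

theorem integral_le_of_nonneg_of_le_const {ν : Measure E} [IsProbabilityMeasure ν] {h : E → ℝ}
    {b : ℝ} (h₀ : ∀ x, 0 ≤ h x) (hb : ∀ x, h x ≤ b) : ∫ x, h x ∂ν ≤ b := by
  simpa using integral_mono_of_nonneg (ae_of_all ν h₀) (integrable_const b) (ae_of_all ν hb)

theorem powerMean_ofReal [AddCommMonoid E] {ν : Measure E} {h : E → ℝ} (h₀ : ∀ x, 0 ≤ h x) {q : ℝ}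
    (hq : 0 < q) {x : E} (hint : Integrable (fun y => h (x + y) ^ q) ν) :
    powerMean ν q (fun y => ENNReal.ofReal (h y)) x =
      ENNReal.ofReal ((∫ y, h (x + y) ^ q ∂ν) ^ (1 / q)) := by
  have hpow : ∀ y, 0 ≤ h (x + y) ^ q := fun y => rpow_nonneg (h₀ _) q
  rw [powerMean, ← ENNReal.ofReal_rpow_of_nonneg (integral_nonneg hpow) (by positivity),
    ofReal_integral_eq_lintegral_ofReal hint (ae_of_all _ hpow)]
  simp only [ENNReal.ofReal_rpow_of_nonneg (h₀ _) hq.le]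

theorem powerMean_ofReal_of_le_const [AddCommMonoid E] [MeasurableAdd E] {ν : Measure E}
    [IsFiniteMeasure ν] {h : E → ℝ} (hh : Measurable h) {b : ℝ} (h₀ : ∀ x, 0 ≤ h x)
    (hb : ∀ x, h x ≤ b) {q : ℝ} (hq : 0 < q) (x : E) :
    powerMean ν q (fun y => ENNReal.ofReal (h y)) x =
      ENNReal.ofReal ((∫ y, h (x + y) ^ q ∂ν) ^ (1 / q)) :=
  powerMean_ofReal h₀ hq (integrable_rpow_of_nonneg_of_le_const
    (hh.comp (measurable_const_add x)) (fun _ => h₀ _) (fun _ => hb _) hq.le)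

theorem IsConvolutionSemigroup.integral_rpow_rpow_le [AddCommMonoid E] [MeasurableAdd₂ E]
    {μ : ℝ → Measure E} (hμ : IsConvolutionSemigroup μ) {r T : ℝ} (hr : 0 < r) (hrT : r < T)
    {q₁ q₂ : ℝ} (hq₁ : 0 < q₁) (hq₂ : 0 < q₂) (hq₂' : q₂ ≤ 1)
    (hrel : T * (1 / q₁ - 1) = r * (1 / q₂ - 1)) {f : E → ℝ} (hf : Measurable f) {b : ℝ}
    (hf₀ : ∀ x, 0 ≤ f x) (hfb : ∀ x, f x ≤ b) :
    (∫ x, f x ^ q₁ ∂μ T) ^ (1 / q₁) ≤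
      (∫ x, (∫ y, f (x + y) ∂μ (T - r)) ^ q₂ ∂μ r) ^ (1 / q₂) := by
  have := hμ.isProbabilityMeasure r hr
  have := hμ.isProbabilityMeasure T (hr.trans hrT)
  have := hμ.isProbabilityMeasure (T - r) (sub_pos.2 hrT)
  set g : E → ℝ := fun x => ∫ y, f (x + y) ∂μ (T - r) with hg
  have hgm : Measurable g :=
    ((hf.comp measurable_add).stronglyMeasurable.integral_prod_right').measurable
  have hg₀ : ∀ x, 0 ≤ g x := fun x => integral_nonneg fun y => hf₀ (x + y)
  have hgb : ∀ x, g x ≤ b := fun x =>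
    integral_le_of_nonneg_of_le_const (fun y => hf₀ (x + y)) fun y => hfb (x + y)
  have hmean : powerMean (μ (T - r)) 1 (fun y => ENNReal.ofReal (f y)) =
      fun x => ENNReal.ofReal (g x) := funext fun x => by
    rw [powerMean_ofReal_of_le_const hf hf₀ hfb one_pos]
    simp [hg]
  have hle := hμ.powerMean_le_powerMean_powerMean hr hrT hq₁ hq₂ hq₂'
    (by linear_combination hrel) hf.ennreal_ofReal 0
  rw [hmean, powerMean_ofReal_of_le_const hf hf₀ hfb hq₁,
    powerMean_ofReal_of_le_const hgm hg₀ hgb hq₂] at hle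
  simpa only [zero_add] using (ENNReal.ofReal_le_ofReal_iff (rpow_nonneg
    (integral_nonneg fun y => rpow_nonneg (hg₀ _) _) _)).1 hle

end BoundedFunctions

section CharFun

variable {V : Type*} [NormedAddCommGroup V] [InnerProductSpace ℝ V] [MeasurableSpace V]

/-- `φ` is the characteristic function of a probability measure on `V`. -/
def IsCharFun (φ : V → ℂ) : Prop :=
  ∃ μ : ProbabilityMeasure V, charFun (μ : Measure V) = φ

namespace IsCharFun

variable [BorelSpace V]

theorem one : IsCharFun (1 : V → ℂ) :=
  ⟨⟨Measure.dirac 0, inferInstance⟩, funext fun ξ => by simp⟩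

variable [SecondCountableTopology V]

theorem mul {φ ψ : V → ℂ} (hφ : IsCharFun φ) (hψ : IsCharFun ψ) : IsCharFun (φ * ψ) := by
  obtain ⟨μ, rfl⟩ := hφ
  obtain ⟨ν, rfl⟩ := hψ
  exact ⟨⟨(μ : Measure V) ∗ ν, inferInstance⟩, funext fun ξ => charFun_conv ξ⟩

theorem pow {φ : V → ℂ} (hφ : IsCharFun φ) (N : ℕ) : IsCharFun (φ ^ N) := by
  induction N with
  | zero => simpa only [pow_zero] using one
  | succ N ih => simpa only [pow_succ] using ih.mul hφ

theorem of_hasSum {c : ℕ → ℝ} (hc₀ : ∀ k, 0 ≤ c k) (hc : HasSum c 1) {φ : ℕ → V → ℂ}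
    (hφ : ∀ k, IsCharFun (φ k)) {ψ : V → ℂ} (hψ : ∀ ξ, HasSum (fun k => c k * φ k ξ) (ψ ξ)) :
    IsCharFun ψ := by
  choose μ hμ using hφ
  set ν : Measure V := .sum fun k => ENNReal.ofReal (c k) • (μ k : Measure V) with hν
  have : IsProbabilityMeasure ν := ⟨by
    simp [hν, ← ENNReal.ofReal_tsum_of_nonneg hc₀ hc.summable, hc.tsum_eq]⟩
  refine ⟨⟨ν, this⟩, funext fun ξ => ?_⟩
  have hint : Integrable (fun x => Complex.exp (⟪x, ξ⟫ * Complex.I)) ν :=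
    .of_bound (Measurable.aestronglyMeasurable (by fun_prop)) 1
      (ae_of_all _ fun x => (Complex.norm_exp_ofReal_mul_I _).le)
  refine (hasSum_integral_measure hint).unique ?_
  simpa [integral_smul_measure, ENNReal.toReal_ofReal (hc₀ _), ← charFun_apply, hμ] using hψ ξ

end IsCharFun

section FiniteDimensional

variable [FiniteDimensional ℝ V] [BorelSpace V]

theorem isCharFun_exp_neg_mul_norm_sq {u : ℝ} (hu : 0 ≤ u) :
    IsCharFun fun ξ : V => (exp (-(u * ‖ξ‖ ^ 2)) : ℂ) := by
  refine ⟨⟨(ProbabilityTheory.stdGaussian V).map (√(2 * u) • ·),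
    Measure.isProbabilityMeasure_map (by fun_prop)⟩, funext fun ξ => ?_⟩
  have hsq : (√(2 * u) : ℂ) ^ 2 = 2 * u := by
    exact_mod_cast Real.sq_sqrt (by positivity : 0 ≤ 2 * u)
  rw [ProbabilityMeasure.coe_mk, charFun_map_smul, ProbabilityTheory.charFun_stdGaussian,
    norm_smul, Real.norm_of_nonneg (sqrt_nonneg _)]
  push_cast
  rw [mul_pow, hsq]
  ring_nf

theorem IsCharFun.of_tendsto {φ : ℕ → V → ℂ} (hφ : ∀ N, IsCharFun (φ N)) {ψ : V → ℂ}
    (hψ : ContinuousAt ψ 0) (hlim : ∀ ξ, Tendsto (fun N => φ N ξ) atTop (𝓝 (ψ ξ))) :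
    IsCharFun ψ := by
  choose μ hμ using hφ
  simp only [← hμ] at hlim
  have htight := isTightMeasureSet_of_tendsto_charFun hψ hlim
  have hcompact : IsCompact (closure (Set.range μ)) :=
    isCompact_closure_of_isTightMeasureSet (by simpa [Set.range] using htight)
  obtain ⟨ν, -, hν⟩ := hcompact.exists_mapClusterPt (f := atTop) (u := μ)
    (tendsto_principal.2 (.of_forall fun N => subset_closure ⟨N, rfl⟩))
  refine ⟨ν, funext fun ξ => ?_⟩
  have hcont : Continuous fun ρ : ProbabilityMeasure V => charFun (ρ : Measure V) ξ := by
    simp_rw [charFun_eq_integral_innerProbChar]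
    exact continuous_iff_continuousAt.2 fun ρ =>
      (ProbabilityMeasure.tendsto_iff_forall_integral_rclike_tendsto ℂ).1 tendsto_id
        (BoundedContinuousFunction.innerProbChar ξ)
  have := (hν.continuousAt_comp hcont.continuousAt).neBot.mono (inf_le_inf_left _ (hlim ξ))
  exact eq_of_nhds_neBot this

end FiniteDimensional

end CharFun

section FractionalBinomial

theorem hasSum_of_tendsto_powerSeries_of_nonneg {c : ℕ → ℝ} (hc : ∀ k, 0 ≤ c k) {F : ℝ → ℝ}
    {L : ℝ} (hF : ∀ z ∈ Set.Ioo (0 : ℝ) 1, HasSum (fun k => c k * z ^ (k + 1)) (F z))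
    (hL : Tendsto F (𝓝[<] 1) (𝓝 L)) : HasSum c L := by
  have hmem : ∀ᶠ z : ℝ in 𝓝[<] 1, z ∈ Set.Ioo (0 : ℝ) 1 := Ioo_mem_nhdsLT one_pos
  have hpartial : ∀ M, ∑ k ∈ Finset.range M, c k ≤ L := fun M => by
    have hM : Tendsto (fun z : ℝ => ∑ k ∈ Finset.range M, c k * z ^ (k + 1)) (𝓝[<] 1)
        (𝓝 (∑ k ∈ Finset.range M, c k)) := by
      refine Tendsto.mono_left ?_ nhdsWithin_le_nhds
      exact Continuous.tendsto' (by fun_prop) _ _ (by simp)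
    refine le_of_tendsto_of_tendsto hM hL ?_
    filter_upwards [hmem] with z hz
    exact sum_le_hasSum _ (fun k _ => mul_nonneg (hc k) (pow_nonneg hz.1.le _)) (hF z hz)
  have hsum : Summable c := summable_of_sum_range_le hc hpartial
  have hge : L ≤ ∑' k, c k := by
    refine le_of_tendsto hL ?_
    filter_upwards [hmem] with z hz
    exact hasSum_le (fun k => mul_le_of_le_one_right (hc k) (pow_le_one₀ hz.1.le hz.2.le))
      (hF z hz) hsum.hasSum
  rw [(hge.antisymm (hsum.tsum_le_of_sum_range_le hpartial) : L = _)]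
  exact hsum.hasSum

theorem add_one_mul_choose_add_one (β : ℝ) (k : ℕ) :
    (k + 1) * Ring.choose β (k + 1) = Ring.choose β k * (β - k) := by
  simp only [Ring.choose_eq_smul, descPochhammer_succ_right, Nat.factorial_succ, smul_eq_mul,
    Polynomial.smeval_mul]
  have : (k.factorial : ℝ) ≠ 0 := by exact_mod_cast k.factorial_ne_zero
  simp [Polynomial.smeval_sub, Polynomial.smeval_natCast, Polynomial.smeval_X]
  field_simp

variable {β : ℝ}

theorem neg_one_pow_mul_choose_add_one_nonneg (hβ₀ : 0 ≤ β) (hβ₁ : β ≤ 1) (k : ℕ) :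
    0 ≤ (-1) ^ k * Ring.choose β (k + 1) := by
  induction k with
  | zero => simpa using hβ₀
  | succ k ih =>
    have hrec := add_one_mul_choose_add_one β (k + 1)
    push_cast at hrec
    have hstep : ((k : ℝ) + 1 + 1) * ((-1) ^ (k + 1) * Ring.choose β (k + 1 + 1)) =
        ((-1) ^ k * Ring.choose β (k + 1)) * (k + (1 - β)) := by
      rw [pow_succ]
      linear_combination -(-1) ^ k * hrec
    refine nonneg_of_mul_nonneg_right (a := (k : ℝ) + 1 + 1) ?_ (by positivity)
    rw [hstep]
    exact mul_nonneg ih (add_nonneg k.cast_nonneg (sub_nonneg.2 hβ₁))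

theorem hasSum_neg_one_pow_mul_choose_mul_pow_of_abs_lt_one (β : ℝ) {z : ℝ} (hz : |z| < 1) :
    HasSum (fun k : ℕ => (-1) ^ k * Ring.choose β (k + 1) * z ^ (k + 1)) (1 - (1 - z) ^ β) := by
  have h := (Real.one_add_rpow_hasFPowerSeriesOnBall_zero (a := β)).hasSum (y := -z)
    (by simpa [← ofReal_norm, ← ENNReal.ofReal_one] using hz)
  simp only [binomialSeries_apply, List.ofFn_const, List.prod_replicate, zero_add,
    smul_eq_mul] at h
  have htail := ((hasSum_nat_add_iff' 1).2 h).neg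
  simp only [Finset.range_one, Finset.sum_singleton, Ring.choose_zero_right, pow_zero, mul_one,
    neg_sub, ← sub_eq_add_neg] at htail
  exact htail.congr_fun fun k => by rw [neg_pow z, pow_succ]; ring

theorem hasSum_neg_one_pow_mul_choose (hβ₀ : 0 < β) (hβ₁ : β ≤ 1) :
    HasSum (fun k : ℕ => (-1) ^ k * Ring.choose β (k + 1)) 1 := by
  refine hasSum_of_tendsto_powerSeries_of_nonneg
    (neg_one_pow_mul_choose_add_one_nonneg hβ₀.le hβ₁) (F := fun z => 1 - (1 - z) ^ β)
    (fun z hz => hasSum_neg_one_pow_mul_choose_mul_pow_of_abs_lt_one β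
      (abs_lt.2 ⟨by linarith [hz.1], hz.2⟩)) ?_
  have hcont : Continuous fun z : ℝ => 1 - (1 - z) ^ β :=
    continuous_const.sub ((continuous_const.sub continuous_id).rpow_const fun _ => .inr hβ₀.le)
  exact (hcont.tendsto' 1 1 (by simp [hβ₀.ne'])).mono_left nhdsWithin_le_nhds

theorem hasSum_neg_one_pow_mul_choose_mul_pow (hβ₀ : 0 < β) (hβ₁ : β ≤ 1) {z : ℝ}
    (hz₀ : 0 ≤ z) (hz₁ : z ≤ 1) :
    HasSum (fun k : ℕ => (-1) ^ k * Ring.choose β (k + 1) * z ^ (k + 1)) (1 - (1 - z) ^ β) := by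
  rcases hz₁.lt_or_eq with hz | rfl
  · exact hasSum_neg_one_pow_mul_choose_mul_pow_of_abs_lt_one β (by rwa [abs_of_nonneg hz₀])
  · simpa [hβ₀.ne'] using hasSum_neg_one_pow_mul_choose hβ₀ hβ₁

end FractionalBinomial

section StableLimit

variable {β t s : ℝ}

theorem tendsto_one_sub_exp_neg_mul_div_nhdsGT_zero (s : ℝ) :
    Tendsto (fun u : ℝ => (1 - exp (-(u * s))) / u) (𝓝[>] 0) (𝓝 s) := by
  have hderiv : HasDerivAt (fun u : ℝ => 1 - exp (-(u * s))) s 0 := by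
    simpa using (((hasDerivAt_id (0 : ℝ)).mul_const s).neg.exp).const_sub 1
  simpa [div_eq_inv_mul] using hderiv.tendsto_slope_zero_right

theorem tendsto_div_natCast_rpow_nhdsGT_zero {p : ℝ} (hp : 0 < p) (ht : 0 < t) :
    Tendsto (fun N : ℕ => (t / N) ^ p) atTop (𝓝[>] 0) := by
  refine tendsto_nhdsWithin_iff.2 ⟨?_, ?_⟩
  · simpa [Real.zero_rpow hp.ne'] using
      (tendsto_const_div_atTop_nhds_zero_nat t).rpow_const (p := p) (.inr hp.le)
  · filter_upwards [eventually_gt_atTop 0] with N hN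
    have : (0 : ℝ) < N := Nat.cast_pos.2 hN
    exact Set.mem_Ioi.2 (by positivity)

theorem tendsto_natCast_mul_one_sub_exp_rpow (hβ : 0 < β) (ht : 0 < t) (hs : 0 ≤ s) :
    Tendsto (fun N : ℕ => N * (1 - exp (-((t / N) ^ (1 / β) * s))) ^ β) atTop
      (𝓝 (t * s ^ β)) := by
  refine ((((tendsto_one_sub_exp_neg_mul_div_nhdsGT_zero s).comp
    (tendsto_div_natCast_rpow_nhdsGT_zero (one_div_pos.2 hβ) ht)).rpow_const
      (p := β) (.inr hβ.le)).const_mul t).congr' ?_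
  filter_upwards [eventually_gt_atTop 0] with N hN
  have : (0 : ℝ) < N := Nat.cast_pos.2 hN
  have hu : 0 < (t / N) ^ (1 / β) := by positivity
  have hnonneg : 0 ≤ 1 - exp (-((t / N) ^ (1 / β) * s)) :=
    sub_nonneg.2 (exp_le_one_iff.2 (neg_nonpos.2 (by positivity)))
  simp only [Function.comp]
  rw [Real.div_rpow hnonneg hu.le, ← Real.rpow_mul (by positivity), one_div_mul_cancel hβ.ne',
    Real.rpow_one]
  field_simp

theorem tendsto_one_sub_one_sub_exp_rpow_pow (hβ : 0 < β) (ht : 0 < t) (hs : 0 ≤ s) :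
    Tendsto (fun N : ℕ => (1 - (1 - exp (-((t / N) ^ (1 / β) * s))) ^ β) ^ N) atTop
      (𝓝 (exp (-(t * s ^ β)))) := by
  simpa [sub_eq_add_neg] using Real.tendsto_one_add_pow_exp_of_tendsto
    (g := fun N : ℕ => -(1 - exp (-((t / N) ^ (1 / β) * s))) ^ β) (t := -(t * s ^ β))
    (by simpa using (tendsto_natCast_mul_one_sub_exp_rpow hβ ht hs).neg)

end StableLimit

section StableCharFun

variable {V : Type*} [NormedAddCommGroup V] [InnerProductSpace ℝ V] [MeasurableSpace V]
  [FiniteDimensional ℝ V] [BorelSpace V]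

theorem isCharFun_one_sub_one_sub_exp_rpow {β u : ℝ} (hβ₀ : 0 < β) (hβ₁ : β ≤ 1) (hu : 0 ≤ u) :
    IsCharFun fun ξ : V => ((1 - (1 - exp (-(u * ‖ξ‖ ^ 2))) ^ β : ℝ) : ℂ) := by
  refine .of_hasSum (neg_one_pow_mul_choose_add_one_nonneg hβ₀.le hβ₁)
    (hasSum_neg_one_pow_mul_choose hβ₀ hβ₁)
    (fun k => (isCharFun_exp_neg_mul_norm_sq (V := V) hu).pow (k + 1)) fun ξ => ?_
  have h := hasSum_neg_one_pow_mul_choose_mul_pow hβ₀ hβ₁ (exp_pos (-(u * ‖ξ‖ ^ 2))).le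
    (exp_le_one_iff.2 (neg_nonpos.2 (by positivity)))
  simpa using Complex.hasSum_ofReal.2 h

theorem isCharFun_exp_neg_mul_norm_rpow {α t : ℝ} (hα₀ : 0 < α) (hα₂ : α ≤ 2) (ht : 0 < t) :
    IsCharFun fun ξ : V => (exp (-(t * ‖ξ‖ ^ α)) : ℂ) := by
  refine .of_tendsto (fun N => (isCharFun_one_sub_one_sub_exp_rpow (V := V) (β := α / 2)
    (u := (t / (N : ℝ)) ^ (1 / (α / 2))) (by positivity) (by linarith) (by positivity)).pow N)
    ?_ fun ξ => ?_
  · have : Continuous fun ξ : V => ‖ξ‖ ^ α := continuous_norm.rpow_const fun _ => .inr hα₀.le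
    exact Continuous.continuousAt (by fun_prop)
  · have h := tendsto_one_sub_one_sub_exp_rpow_pow (half_pos hα₀) ht (sq_nonneg ‖ξ‖)
    have hpow : (‖ξ‖ ^ 2) ^ (α / 2) = ‖ξ‖ ^ α := by
      rw [← Real.rpow_natCast_mul (norm_nonneg ξ), Nat.cast_ofNat, mul_div_cancel₀ α two_ne_zero]
    rw [hpow] at h
    simpa [Function.comp_def] using (Complex.continuous_ofReal.tendsto _).comp h

end StableCharFun

section Inversion

open scoped ContDiff

variable {V : Type*} [NormedAddCommGroup V] [MeasurableSpace V] [BorelSpace V]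

theorem locallyIntegrable_toReal_rnDeriv_smul [ProperSpace V] {μ ρ : Measure V}
    [μ.HaveLebesgueDecomposition ρ] [SigmaFinite μ] (hμρ : μ ≪ ρ) {k : V → ℝ}
    (hk : LocallyIntegrable k μ) :
    LocallyIntegrable (fun x => (μ.rnDeriv ρ x).toReal • k x) ρ := by
  rw [locallyIntegrable_iff] at hk ⊢
  intro K hK
  rw [← integrable_indicator_iff hK.measurableSet, Set.indicator_smul,
    integrable_rnDeriv_smul_iff hμρ, integrable_indicator_iff hK.measurableSet]
  exact hk K hK

theorem toReal_rnDeriv_ae_eq_of_forall_integral_contDiff_mul_eq [NormedSpace ℝ V]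
    [FiniteDimensional ℝ V] {μ ν ρ : Measure V} [IsLocallyFiniteMeasure μ]
    [IsLocallyFiniteMeasure ν] [SigmaFinite ρ] (hμρ : μ ≪ ρ) (hνρ : ν ≪ ρ) {k : V → ℝ}
    (hk : LocallyIntegrable k μ)
    (h : ∀ g : V → ℝ, ContDiff ℝ ∞ g → HasCompactSupport g → ∫ x, g x ∂ν = ∫ x, g x * k x ∂μ) :
    ∀ᵐ x ∂ρ, (ν.rnDeriv ρ x).toReal = (μ.rnDeriv ρ x).toReal * k x := by
  have := FiniteDimensional.proper ℝ V
  have hμi := locallyIntegrable_toReal_rnDeriv_smul hμρ hk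
  have hνi := locallyIntegrable_toReal_rnDeriv_smul hνρ (locallyIntegrable_const (1 : ℝ))
  have hzero : ∀ᵐ x ∂ρ, (ν.rnDeriv ρ x).toReal • 1 - (μ.rnDeriv ρ x).toReal • k x = 0 := by
    refine ae_eq_zero_of_integral_contDiff_smul_eq_zero (hνi.sub hμi) fun g hg hgc => ?_
    have hcomm : ∀ (c y : ℝ) x, g x • c • y = c • (g x * y) := by
      intro c y x
      simp [mul_left_comm]
    simp only [smul_sub]
    rw [integral_sub (hνi.integrable_smul_left_of_hasCompactSupport hg.continuous hgc)
      (hμi.integrable_smul_left_of_hasCompactSupport hg.continuous hgc)]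
    simp only [hcomm, mul_one]
    rw [integral_rnDeriv_smul hνρ, integral_rnDeriv_smul hμρ, h g hg hgc, sub_self]
  filter_upwards [hzero] with x hx
  simpa [sub_eq_zero] using hx

theorem nonneg_and_eq_withDensity_of_forall_integral_contDiff_mul_eq [NormedSpace ℝ V]
    [FiniteDimensional ℝ V] {μ ν : Measure V} [IsLocallyFiniteMeasure μ]
    [IsLocallyFiniteMeasure ν] {k : V → ℝ} (hk : LocallyIntegrable k μ)
    (h : ∀ g : V → ℝ, ContDiff ℝ ∞ g → HasCompactSupport g → ∫ x, g x ∂ν = ∫ x, g x * k x ∂μ) :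
    0 ≤ᵐ[μ] k ∧ ν = μ.withDensity fun x => ENNReal.ofReal (k x) := by
  have := FiniteDimensional.proper ℝ V
  let ρ := μ + ν
  have hμρ : μ ≪ ρ := Measure.absolutelyContinuous_of_le (Measure.le_add_right le_rfl)
  have hνρ : ν ≪ ρ := Measure.absolutelyContinuous_of_le (Measure.le_add_left le_rfl)
  have heq := toReal_rnDeriv_ae_eq_of_forall_integral_contDiff_mul_eq hμρ hνρ hk h
  constructor
  · filter_upwards [hμρ.ae_le heq, Measure.rnDeriv_pos hμρ, hμρ.ae_le (μ.rnDeriv_lt_top ρ)]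
      with x hx hpos hlt
    exact nonneg_of_mul_nonneg_right (hx ▸ ENNReal.toReal_nonneg)
      (ENNReal.toReal_pos hpos.ne' hlt.ne)
  · have hrn : ν.rnDeriv ρ =ᵐ[ρ] μ.rnDeriv ρ * fun x => ENNReal.ofReal (k x) := by
      filter_upwards [heq, ν.rnDeriv_lt_top ρ, μ.rnDeriv_lt_top ρ] with x hx hν hμ
      rw [Pi.mul_apply, ← ENNReal.ofReal_toReal hν.ne, hx,
        ENNReal.ofReal_mul ENNReal.toReal_nonneg, ENNReal.ofReal_toReal hμ.ne]
    have hkm : AEMeasurable (fun x => ENNReal.ofReal (k x)) (ρ.withDensity (μ.rnDeriv ρ)) := by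
      rw [Measure.withDensity_rnDeriv_eq _ _ hμρ]
      exact hk.aestronglyMeasurable.aemeasurable.ennreal_ofReal
    ext s hs
    rw [withDensity_apply _ hs, ← Measure.setLIntegral_rnDeriv hνρ, ← lintegral_indicator hs,
      ← lintegral_indicator hs]
    conv_rhs => rw [← Measure.withDensity_rnDeriv_eq _ _ hμρ]
    rw [lintegral_withDensity_eq_lintegral_mul₀' (by fun_prop) (hkm.indicator hs)]
    refine lintegral_congr_ae ?_
    filter_upwards [hrn] with x hx
    by_cases hxs : x ∈ s <;> simp [hxs, hx]

theorem integral_schwartz_eq_integral_mul_fourier_charFun [InnerProductSpace ℝ V]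
    [FiniteDimensional ℝ V] {ν : Measure V} [IsFiniteMeasure ν] (hν : Integrable (charFun ν))
    (g : SchwartzMap V ℂ) :
    ∫ x, g x ∂ν = ∫ x, 𝓕 (fun ξ => charFun ν ((2 * π) • ξ)) x * g x := by
  have hν' : Integrable fun ξ => charFun ν ((2 * π) • ξ) := hν.comp_smul (by positivity)
  calc ∫ x, g x ∂ν = ∫ x, 𝓕 (𝓕⁻ g) x ∂ν := by rw [FourierTransform.fourier_fourierInv_eq]
    _ = ∫ ξ, charFun ν (-((2 * π) • ξ)) * 𝓕⁻ g ξ := by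
      have h := VectorFourier.integral_fourierIntegral_smul_eq_flip (L := innerₗ V) (μ := ν)
        (f := 1) Real.continuous_fourierChar continuous_inner (integrable_const 1)
        (𝓕⁻ g).integrable (ν := volume)
      simp only [flip_innerₗ, Pi.one_apply, one_smul] at h
      refine h.symm.trans (integral_congr_ae (ae_of_all _ fun ξ => ?_))
      simp only [charFun_eq_fourierIntegral', smul_neg, neg_smul, neg_neg, smul_eq_mul,
        inv_smul_smul₀ two_pi_pos.ne']
    _ = ∫ ξ, charFun ν ((2 * π) • ξ) * 𝓕 (g : V → ℂ) ξ := by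
      rw [← integral_neg_eq_self]
      simp [SchwartzMap.fourierInv_coe, Real.fourierInv_eq_fourier_neg]
    _ = ∫ x, 𝓕 (fun ξ => charFun ν ((2 * π) • ξ)) x * g x := by
      have h := VectorFourier.integral_fourierIntegral_smul_eq_flip (L := innerₗ V)
        Real.continuous_fourierChar continuous_inner hν' (g.integrable (μ := volume))
      simpa using! h.symm

variable [InnerProductSpace ℝ V] [FiniteDimensional ℝ V] {ν : Measure V}

theorem continuous_fourier_charFun (hν : Integrable (charFun ν)) :
    Continuous (𝓕 fun ξ => charFun ν ((2 * π) • ξ)) :=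
  VectorFourier.fourierIntegral_continuous Real.continuous_fourierChar continuous_inner
    (hν.comp_smul (by positivity))

variable [IsFiniteMeasure ν]

theorem re_fourier_charFun_ae_nonneg_and_eq_withDensity (hν : Integrable (charFun ν)) :
    0 ≤ᵐ[volume] (fun x => (𝓕 (fun ξ => charFun ν ((2 * π) • ξ)) x).re) ∧
      ν = volume.withDensity fun x =>
        ENNReal.ofReal (𝓕 (fun ξ => charFun ν ((2 * π) • ξ)) x).re := by
  have hcont := continuous_fourier_charFun hν
  refine nonneg_and_eq_withDensity_of_forall_integral_contDiff_mul_eq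
    (Complex.continuous_re.comp hcont).locallyIntegrable fun g hg hgc => ?_
  have hgc' : HasCompactSupport fun x => (g x : ℂ) := hgc.comp_left Complex.ofReal_zero
  have hg' : ContDiff ℝ ∞ fun x => (g x : ℂ) := Complex.ofRealCLM.contDiff.comp hg
  have h := congrArg RCLike.re
    (integral_schwartz_eq_integral_mul_fourier_charFun hν (hgc'.toSchwartzMap hg'))
  simp only [HasCompactSupport.toSchwartzMap_toFun] at h
  have hint : Integrable fun x => 𝓕 (fun ξ => charFun ν ((2 * π) • ξ)) x * (g x : ℂ) :=
    (hcont.mul hg'.continuous).integrable_of_hasCompactSupport hgc'.mul_left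
  rw [integral_complex_ofReal, ← integral_re hint] at h
  simpa [mul_comm] using h

theorem re_fourier_charFun_nonneg (hν : Integrable (charFun ν)) (x : V) :
    0 ≤ (𝓕 (fun ξ => charFun ν ((2 * π) • ξ)) x).re := by
  have hclosed := isClosed_le (continuous_const (y := (0 : ℝ)))
    (Complex.continuous_re.comp (continuous_fourier_charFun hν))
  exact hclosed.closure_subset
    (Measure.dense_of_ae (re_fourier_charFun_ae_nonneg_and_eq_withDensity hν).1 x)

end Inversion

section StableMeasure

theorem integrable_exp_neg_mul_norm_rpow {V : Type*} [NormedAddCommGroup V] [NormedSpace ℝ V]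
    [FiniteDimensional ℝ V] [MeasurableSpace V] [BorelSpace V] (μ : Measure V)
    [μ.IsAddHaarMeasure] {α t : ℝ} (hα : 0 < α) (ht : 0 < t) :
    Integrable (fun ξ : V => exp (-(t * ‖ξ‖ ^ α))) μ := by
  cases subsingleton_or_nontrivial V
  · exact .of_finite
  refine (integrable_fun_norm_addHaar μ (f := fun y : ℝ => exp (-(t * y ^ α)))).2 ?_
  simpa [Real.rpow_natCast] using integrableOn_rpow_mul_exp_neg_mul_rpow (p := α)
    (s := ((Module.finrank ℝ V - 1 : ℕ) : ℝ)) (b := t)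
    (neg_one_lt_zero.trans_le (Nat.cast_nonneg _)) hα ht

/-- The law with density `stableKernel n α t`. -/
noncomputable def stableMeasure (n : ℕ) (α t : ℝ) : Measure (EuclideanSpace ℝ (Fin n)) :=
  volume.withDensity fun x => ENNReal.ofReal (stableKernel n α t x)

variable {n : ℕ} {α t : ℝ}

theorem stableKernel_neg (α t : ℝ) (x : EuclideanSpace ℝ (Fin n)) :
    stableKernel n α t (-x) = stableKernel n α t x := by
  unfold stableKernel
  rw [← integral_neg_eq_self]
  simp

theorem integrable_exp_neg_mul_norm_two_pi_smul_rpow (hα : 0 < α) (ht : 0 < t) :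
    Integrable fun ξ : EuclideanSpace ℝ (Fin n) => (exp (-(t * ‖(2 * π) • ξ‖ ^ α)) : ℂ) :=
  ((integrable_exp_neg_mul_norm_rpow volume hα ht).comp_smul (by positivity)).ofReal

theorem stableKernel_eq_re_fourier (hα : 0 < α) (ht : 0 < t) :
    stableKernel n α t = fun x => (𝓕 (fun ξ : EuclideanSpace ℝ (Fin n) =>
      (exp (-(t * ‖(2 * π) • ξ‖ ^ α)) : ℂ)) x).re := by
  funext x
  set h : EuclideanSpace ℝ (Fin n) → ℝ := fun ξ =>
    (Complex.exp ((⟪-x, ξ⟫ : ℂ) * Complex.I - ((t * ‖ξ‖ ^ α : ℝ) : ℂ))).re with hh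
  symm
  calc (𝓕 (fun ξ : EuclideanSpace ℝ (Fin n) => (exp (-(t * ‖(2 * π) • ξ‖ ^ α)) : ℂ)) x).re
    _ = ∫ ξ, (𝐞 (-⟪ξ, x⟫) • (exp (-(t * ‖(2 * π) • ξ‖ ^ α)) : ℂ)).re := by
      rw [Real.fourier_eq]
      exact (integral_re ((Real.fourierIntegral_convergent_iff x).2
        (integrable_exp_neg_mul_norm_two_pi_smul_rpow hα ht))).symm
    _ = ∫ ξ, h ((2 * π) • ξ) := by
      refine integral_congr_ae (ae_of_all _ fun ξ => ?_)
      simp only [hh, Circle.smul_def, Real.fourierChar_apply, smul_eq_mul]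
      rw [Complex.ofReal_exp, ← Complex.exp_add, Complex.ofReal_neg, ← sub_eq_add_neg,
        real_inner_comm, inner_neg_left, real_inner_smul_right, mul_neg]
    _ = stableKernel n α t x := by
      rw [Measure.integral_comp_smul, finrank_euclideanSpace_fin, abs_of_pos (by positivity),
        ← stableKernel_neg, stableKernel, rpow_neg two_pi_pos.le, rpow_natCast, smul_eq_mul]

theorem continuous_stableKernel (hα : 0 < α) (ht : 0 < t) : Continuous (stableKernel n α t) := by
  rw [stableKernel_eq_re_fourier hα ht]
  exact Complex.continuous_re.comp (VectorFourier.fourierIntegral_continuous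
    Real.continuous_fourierChar continuous_inner
    (integrable_exp_neg_mul_norm_two_pi_smul_rpow hα ht))

theorem stableKernel_nonneg_and_stableMeasure_eq {ν : Measure (EuclideanSpace ℝ (Fin n))}
    [IsFiniteMeasure ν] (hα : 0 < α) (ht : 0 < t)
    (hν : charFun ν = fun ξ => (exp (-(t * ‖ξ‖ ^ α)) : ℂ)) :
    (∀ x, 0 ≤ stableKernel n α t x) ∧ stableMeasure n α t = ν := by
  have hint : Integrable (charFun ν) :=
    hν ▸ (integrable_exp_neg_mul_norm_rpow volume hα ht).ofReal
  have hkernel : stableKernel n α t = fun x => (𝓕 (fun ξ => charFun ν ((2 * π) • ξ)) x).re := by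
    rw [hν, stableKernel_eq_re_fourier hα ht]
  rw [stableMeasure, hkernel]
  exact ⟨re_fourier_charFun_nonneg hint,
    (re_fourier_charFun_ae_nonneg_and_eq_withDensity hint).2.symm⟩

theorem stableKernel_nonneg (hα : 0 < α) (hα2 : α ≤ 2) (ht : 0 < t)
    (x : EuclideanSpace ℝ (Fin n)) : 0 ≤ stableKernel n α t x := by
  obtain ⟨ν, hν⟩ := isCharFun_exp_neg_mul_norm_rpow (V := EuclideanSpace ℝ (Fin n)) hα hα2 ht
  exact (stableKernel_nonneg_and_stableMeasure_eq hα ht hν).1 x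

theorem isProbabilityMeasure_stableMeasure (hα : 0 < α) (hα2 : α ≤ 2) (ht : 0 < t) :
    IsProbabilityMeasure (stableMeasure n α t) := by
  obtain ⟨ν, hν⟩ := isCharFun_exp_neg_mul_norm_rpow (V := EuclideanSpace ℝ (Fin n)) hα hα2 ht
  rw [(stableKernel_nonneg_and_stableMeasure_eq hα ht hν).2]
  infer_instance

theorem charFun_stableMeasure (hα : 0 < α) (hα2 : α ≤ 2) (ht : 0 < t)
    (ξ : EuclideanSpace ℝ (Fin n)) :
    charFun (stableMeasure n α t) ξ = (exp (-(t * ‖ξ‖ ^ α)) : ℂ) := by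
  obtain ⟨ν, hν⟩ := isCharFun_exp_neg_mul_norm_rpow (V := EuclideanSpace ℝ (Fin n)) hα hα2 ht
  rw [(stableKernel_nonneg_and_stableMeasure_eq hα ht hν).2, hν]

theorem integral_stableMeasure {F : Type*} [NormedAddCommGroup F] [NormedSpace ℝ F]
    (hα : 0 < α) (hα2 : α ≤ 2) (ht : 0 < t) (g : EuclideanSpace ℝ (Fin n) → F) :
    ∫ x, g x ∂stableMeasure n α t = ∫ x, stableKernel n α t x • g x := by
  rw [stableMeasure, integral_withDensity_eq_integral_toReal_smul
    (continuous_stableKernel hα ht).measurable.ennreal_ofReal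
    (ae_of_all _ fun _ => ENNReal.ofReal_lt_top)]
  simp only [ENNReal.toReal_ofReal (stableKernel_nonneg hα hα2 ht _)]

theorem isConvolutionSemigroup_stableMeasure (hα : 0 < α) (hα2 : α ≤ 2) :
    IsConvolutionSemigroup (stableMeasure n α) where
  isProbabilityMeasure _ ht := isProbabilityMeasure_stableMeasure hα hα2 ht
  conv s hs t ht := by
    have := isProbabilityMeasure_stableMeasure (n := n) hα hα2 hs
    have := isProbabilityMeasure_stableMeasure (n := n) hα hα2 ht
    have := isProbabilityMeasure_stableMeasure (n := n) hα hα2 (add_pos hs ht)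
    refine Measure.ext_of_charFun (funext fun ξ => ?_)
    rw [charFun_conv, charFun_stableMeasure hα hα2 hs, charFun_stableMeasure hα hα2 ht,
      charFun_stableMeasure hα hα2 (add_pos hs ht), ← Complex.ofReal_mul, ← exp_add, add_mul,
      neg_add]

theorem map_smul_stableMeasure (hα : 0 < α) (hα2 : α ≤ 2) (ht : 0 < t) {c : ℝ} (hc : 0 < c) :
    (stableMeasure n α t).map (c • ·) = stableMeasure n α (c ^ α * t) := by
  have hct : 0 < c ^ α * t := by positivity
  have := isProbabilityMeasure_stableMeasure (n := n) hα hα2 ht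
  have := isProbabilityMeasure_stableMeasure (n := n) hα hα2 hct
  refine Measure.ext_of_charFun (funext fun ξ => ?_)
  rw [charFun_map_smul, charFun_stableMeasure hα hα2 ht, charFun_stableMeasure hα hα2 hct,
    norm_smul, norm_of_nonneg hc.le, mul_rpow hc.le (norm_nonneg _), ← mul_assoc, mul_comm t]

end StableMeasure

section LevyOrnsteinUhlenbeck

variable {n : ℕ} {α t : ℝ}

theorem stableSemigroup_eq_integral (hα : 0 < α) (hα2 : α ≤ 2) (ht : 0 < t)
    (f : EuclideanSpace ℝ (Fin n) → ℝ) (x : EuclideanSpace ℝ (Fin n)) :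
    stableSemigroup n α t f x = ∫ y, f (x + y) ∂stableMeasure n α t := by
  rw [stableSemigroup, if_neg ht.ne', integral_stableMeasure hα hα2 ht,
    ← integral_add_left_eq_self _ x]
  simp [stableKernel_neg]

theorem LOU_zero (f : EuclideanSpace ℝ (Fin n) → ℝ) : LOU n α 0 f = f := by
  funext x
  simp [LOU, stableSemigroup]

theorem exp_neg_rpow_mul_one_div (α t : ℝ) : exp (-t) ^ α * (1 / α) = exp (-α * t) / α := by
  rw [← exp_mul, mul_one_div, neg_mul_comm, mul_comm]

theorem exp_neg_mul_div_lt_one_div (hα : 0 < α) (ht : 0 < t) : exp (-α * t) / α < 1 / α :=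
  div_lt_div_of_pos_right (exp_lt_one_iff.2 (mul_neg_of_neg_of_pos (neg_lt_zero.2 hα) ht)) hα

theorem integral_LOU_rpow (hα : 0 < α) (hα2 : α ≤ 2) (ht : 0 < t) (q : ℝ)
    {f : EuclideanSpace ℝ (Fin n) → ℝ} (hf : Measurable f) :
    ∫ x, LOU n α t f x ^ q ∂stableMeasure n α (1 / α) =
      ∫ x, (∫ y, f (x + y) ∂stableMeasure n α (1 / α - exp (-α * t) / α)) ^ q
        ∂stableMeasure n α (exp (-α * t) / α) := by
  have hs : 0 < (1 - exp (-α * t)) / α :=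
    sub_div 1 _ α ▸ sub_pos.2 (exp_neg_mul_div_lt_one_div hα ht)
  have := isProbabilityMeasure_stableMeasure (n := n) hα hα2 hs
  have hmeas : Measurable fun x => ∫ y, f (x + y) ∂stableMeasure n α ((1 - exp (-α * t)) / α) :=
    ((hf.comp measurable_add).stronglyMeasurable.integral_prod_right').measurable
  rw [← sub_div, ← exp_neg_rpow_mul_one_div, ← map_smul_stableMeasure hα hα2 (one_div_pos.2 hα)
    (exp_pos _), integral_map (by fun_prop) (hmeas.pow_const q).aestronglyMeasurable]
  simp only [LOU, stableSemigroup_eq_integral hα hα2 hs]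

end LevyOrnsteinUhlenbeck

theorem reverse_hypercontractivity_levy_OU_general (n : ℕ) (α : ℝ) (hα : 0 < α) (hα2 : α ≤ 2)
    (t : ℝ) (ht : 0 ≤ t) (q₁ q₂ : ℝ) (hq₁ : 0 < q₁) (hq₁' : q₁ ≤ 1) (hq₂ : 0 < q₂)
    (hrel : q₂ - 1 = (q₂ / q₁) * (q₁ - 1) * Real.exp (α * t))
    (f : EuclideanSpace ℝ (Fin n) → ℝ) (hf : Measurable f)
    (b : ℝ) (hfb : ∀ x, 0 ≤ f x ∧ f x ≤ b) :
    (∫ x, f x ^ q₁ * stableKernel n α (1 / α) x) ^ (1 / q₁) ≤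
      (∫ x, LOU n α t f x ^ q₂ * stableKernel n α (1 / α) x) ^ (1 / q₂) := by
  have hμ (g : EuclideanSpace ℝ (Fin n) → ℝ) :
      ∫ x, g x * stableKernel n α (1 / α) x = ∫ x, g x ∂stableMeasure n α (1 / α) := by
    simp only [integral_stableMeasure hα hα2 (one_div_pos.2 hα), smul_eq_mul, mul_comm]
  have hrel' : 1 / q₁ - 1 = exp (-α * t) * (1 / q₂ - 1) := by
    rw [neg_mul, exp_neg]
    field_simp at hrel ⊢
    linarith
  have hq₂' : q₂ ≤ 1 := by
    rw [← sub_nonpos, hrel]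
    exact mul_nonpos_of_nonpos_of_nonneg
      (mul_nonpos_of_nonneg_of_nonpos (by positivity) (sub_nonpos.2 hq₁')) (exp_pos _).le
  rcases ht.eq_or_lt with rfl | ht
  · obtain rfl : q₁ = q₂ := by simpa using hrel'
    rw [LOU_zero]
  rw [hμ, hμ, integral_LOU_rpow hα hα2 ht q₂ hf]
  exact (isConvolutionSemigroup_stableMeasure hα hα2).integral_rpow_rpow_le (by positivity)
    (exp_neg_mul_div_lt_one_div hα ht) hq₁ hq₂ hq₂' (by rw [hrel']; ring) hf
    (fun x => (hfb x).1) (fun x => (hfb x).2)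

theorem reverse_hypercontractivity_levy_OU (n : ℕ) (hn : 1 ≤ n)
    (α : ℝ) (hα : 0 < α) (hα2 : α ≤ 2) (t : ℝ) (ht : 0 ≤ t)
    (q₁ q₂ : ℝ) (hq₂ : 0 < q₂) (hq : q₂ ≤ q₁) (hq₁ : q₁ < 1)
    (hrel : q₂ - 1 = (q₂ / q₁) * (q₁ - 1) * Real.exp (α * t))
    (f : EuclideanSpace ℝ (Fin n) → ℝ) (hf : Measurable f)
    (a b : ℝ) (ha : 0 < a) (hab : ∀ x, a ≤ f x ∧ f x ≤ b) :
    (∫ x, f x ^ q₁ * stableKernel n α (1 / α) x) ^ (1 / q₁) ≤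
      (∫ x, LOU n α t f x ^ q₂ * stableKernel n α (1 / α) x) ^ (1 / q₂) :=
  reverse_hypercontractivity_levy_OU_general n α hα hα2 t ht q₁ q₂ (hq₂.trans_le hq) hq₁.le hq₂
    hrel f hf b fun x => ⟨ha.le.trans (hab x).1, (hab x).2⟩
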